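/- The metric space (J, d_J) is complete and separable. -/

import Mathlib

/-!
# Completeness and separability of the space `J`

Separability: finitely many blocks of an interval partition carry all but `ε` of its length. Keeping
these blocks, with masses rounded up and values rounded down to multiples of `1 / N`, gives a nearby
point described by finitely many rational numbers (`exists_rationalPoint`).

Completeness: by the triangle inequality (`dJ_triangle`, composition of correspondences) it is
enough to treat a sequence `x n` with `dJ (x n) (x (n + 1)) < 2⁻ⁿ`. Since `ℚ` is a dense order
without endpoints, the blocks occurring in the chosen correspondences can be labelled by rational
numbers, increasingly in each `x n`, such that matched blocks carry the same label
(`exists_labelling`). If `M n q` is the mass of the block of `x n` with label `q` (or `0`), then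
quantities (i) and (ii) of the distortion bound `∑ q, |M n q - M (n + 1) q|` by `2 * 2⁻ⁿ`, so the
masses converge in `ℓ¹(ℚ)`. A label of positive limit mass is matched at all late times, so the
values on it converge by (iii). A label may die and be reused for an unrelated block; this is
harmless, because an unmatched label pays for its whole mass on both sides.

It remains to realise a summable family of masses with increasing values by a point of `J`
(`MassData.toJ`): the block with label `q` starts at the total mass of the labels below `q`, and
the function at `t` is the infimum of the value at infinity and of the values of the blocks ending
after `t`, which is automatically right-continuous. `MassData.dJ_toJ_le` estimates the distance to
such a point, and serves both halves of the theorem.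
-/

open MeasureTheory Filter Topology Set

/-- An interval partition of `[0, L]`: a set of disjoint open subintervals whose
complement in `[0, L]` is Lebesgue-null. A block is encoded by its endpoint pair
`(a, b)` with `a < b`, representing the open interval `(a, b)`. -/
structure IntervalPartition where
  length : ℝ
  length_nonneg : 0 ≤ length
  blocks : Set (ℝ × ℝ)
  blocks_lt : ∀ p ∈ blocks, p.1 < p.2
  blocks_sub : ∀ p ∈ blocks, 0 ≤ p.1 ∧ p.2 ≤ length
  blocks_disjoint : ∀ p ∈ blocks, ∀ q ∈ blocks, p ≠ q →
    Set.Ioo p.1 p.2 ∩ Set.Ioo q.1 q.2 = ∅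
  compl_null : volume (Set.Icc 0 length \ ⋃ p ∈ blocks, Set.Ioo p.1 p.2) = 0

namespace IntervalPartition

/-- The mass (Lebesgue measure) of a block `(a, b)`. -/
def mass (p : ℝ × ℝ) : ℝ := p.2 - p.1

/-- The complement `C_β = [0, ‖β‖] \ ⋃_{U ∈ β} U`. -/
def cset (β : IntervalPartition) : Set ℝ :=
  Set.Icc 0 β.length \ ⋃ p ∈ β.blocks, Set.Ioo p.1 p.2

/-- A correspondence between `β` and `γ`: a finite sequence of pairs of blocks,
strictly increasing in the left-to-right order in each coordinate. -/
def IsCorrespondence (β γ : IntervalPartition) (n : ℕ)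
    (c : Fin n → (ℝ × ℝ) × (ℝ × ℝ)) : Prop :=
  (∀ j, (c j).1 ∈ β.blocks ∧ (c j).2 ∈ γ.blocks) ∧
  (∀ j k : Fin n, j < k → (c j).1.2 ≤ (c k).1.1 ∧ (c j).2.2 ≤ (c k).2.1)

/-- The Hausdorff distortion of a correspondence: the maximum of quantities
(i) and (ii) of the paper. -/
noncomputable def hausDistortion (β γ : IntervalPartition) (n : ℕ)
    (c : Fin n → (ℝ × ℝ) × (ℝ × ℝ)) : ℝ :=
  max ((∑ j : Fin n, |mass (c j).1 - mass (c j).2|) + β.length - ∑ j : Fin n, mass (c j).1)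
      ((∑ j : Fin n, |mass (c j).1 - mass (c j).2|) + γ.length - ∑ j : Fin n, mass (c j).2)

/-- The metric `d_H'`: infimum of the Hausdorff distortion over all correspondences. -/
noncomputable def dHp (β γ : IntervalPartition) : ℝ :=
  sInf {x | ∃ n, ∃ c : Fin n → (ℝ × ℝ) × (ℝ × ℝ),
    IsCorrespondence β γ n c ∧ x = hausDistortion β γ n c}

/-- The metric `d_H`: the Hausdorff distance between the complements. -/
noncomputable def dH (β γ : IntervalPartition) : ℝ :=
  Metric.hausdorffDist β.cset γ.cset

/-- The number of blocks of mass `> h` ending at or before `t`. -/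
noncomputable def divCount (β : IntervalPartition) (t h : ℝ) : ℕ :=
  Set.ncard {p : ℝ × ℝ | p ∈ β.blocks ∧ h < p.2 - p.1 ∧ p.2 ≤ t}

/-- `β` has `a`-diversity `d` at `t`:
`Γ(1-a) · lim_{h↓0} h^a · #{(x,y) ∈ β : y - x > h, y ≤ t} = d`. -/
def HasDiversity (a : ℝ) (β : IntervalPartition) (t d : ℝ) : Prop :=
  Tendsto (fun h : ℝ => Real.Gamma (1 - a) * h ^ a * (divCount β t h : ℝ))
    (𝓝[>] 0) (𝓝 d)

/-- The `a`-diversity property: the diversity limit exists at every `t ∈ [0, ‖β‖]`. -/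
def HasDiversityProp (a : ℝ) (β : IntervalPartition) : Prop :=
  ∀ t ∈ Set.Icc 0 β.length, ∃ d, HasDiversity a β t d

/-- The diversity function `𝒟_β(t)` (the value of the limit, when it exists). -/
noncomputable def diversity (a : ℝ) (β : IntervalPartition) (t : ℝ) : ℝ :=
  limUnder (𝓝[>] (0:ℝ)) (fun h : ℝ => Real.Gamma (1 - a) * h ^ a * (divCount β t h : ℝ))

/-- The total diversity `𝒟_β(∞) = 𝒟_β(‖β‖)`. -/
noncomputable def totalDiversity (a : ℝ) (β : IntervalPartition) : ℝ :=
  diversity a β β.length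

/-- The diversity `𝒟_β(U)` of a block `U`, evaluated at its midpoint. -/
noncomputable def blockDiversity (a : ℝ) (β : IntervalPartition) (p : ℝ × ℝ) : ℝ :=
  diversity a β ((p.1 + p.2) / 2)

/-- The `a`-distortion of a correspondence: the maximum of quantities (i)-(iv). -/
noncomputable def alphaDistortion (a : ℝ) (β γ : IntervalPartition) (n : ℕ)
    (c : Fin n → (ℝ × ℝ) × (ℝ × ℝ)) : ℝ :=
  max (hausDistortion β γ n c)
    (max (⨆ j : Fin n, |blockDiversity a β (c j).1 - blockDiversity a γ (c j).2|)
         |totalDiversity a β - totalDiversity a γ|)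

/-- The metric `d_α`: infimum of the `a`-distortion over all correspondences. -/
noncomputable def dA (a : ℝ) (β γ : IntervalPartition) : ℝ :=
  sInf {x | ∃ n, ∃ c : Fin n → (ℝ × ℝ) × (ℝ × ℝ),
    IsCorrespondence β γ n c ∧ x = alphaDistortion a β γ n c}

end IntervalPartition

/-- A point of the space `J`: an interval partition `η` together with an increasing,
right-continuous function `f` that is constant on every block of `η`, on `[‖η‖, ∞)`,
and (as `f` is defined on `[0, ∞]`) on `(-∞, 0]`. -/
structure JPoint where
  part : IntervalPartition
  f : ℝ → ℝ
  f_nonneg : ∀ t, 0 ≤ f t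
  f_mono : Monotone f
  f_rightCont : ∀ t, ContinuousWithinAt f (Set.Ici t) t
  f_const_block : ∀ p ∈ part.blocks, ∀ s ∈ Set.Ioo p.1 p.2, ∀ t ∈ Set.Ioo p.1 p.2, f s = f t
  f_const_top : ∀ t, part.length ≤ t → f t = f part.length
  f_const_neg : ∀ t, t ≤ (0:ℝ) → f t = f 0

/-- The distortion of a correspondence between two points of `J`: as the
`a`-distortion, but with `f`, `g` in place of the diversity functions. -/
noncomputable def jDistortion (x y : JPoint) (n : ℕ)
    (c : Fin n → (ℝ × ℝ) × (ℝ × ℝ)) : ℝ :=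
  max (IntervalPartition.hausDistortion x.part y.part n c)
    (max (⨆ j : Fin n, |x.f (((c j).1.1 + (c j).1.2) / 2) - y.f (((c j).2.1 + (c j).2.2) / 2)|)
         |x.f x.part.length - y.f y.part.length|)

/-- The metric `d_J` on `J`. -/
noncomputable def dJ (x y : JPoint) : ℝ :=
  sInf {r | ∃ n, ∃ c : Fin n → (ℝ × ℝ) × (ℝ × ℝ),
    IntervalPartition.IsCorrespondence x.part y.part n c ∧ r = jDistortion x y n c}

/-! ### Blocks of an interval partition -/

namespace IntervalPartition

lemma mass_pos {β : IntervalPartition} {p : ℝ × ℝ} (hp : p ∈ β.blocks) : 0 < mass p :=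
  sub_pos.2 (β.blocks_lt p hp)

lemma snd_le_fst {β : IntervalPartition} {p q : ℝ × ℝ} (hp : p ∈ β.blocks) (hq : q ∈ β.blocks)
    (h : p.1 < q.1) : p.2 ≤ q.1 := by
  by_contra! h2
  have hpq : p ≠ q := fun e => by rw [e] at h; exact lt_irrefl _ h
  have hd := β.blocks_disjoint p hp q hq hpq
  have hl := β.blocks_lt q hq
  obtain ⟨t, ht1, ht2⟩ := exists_between (lt_min h2 hl)
  have : t ∈ Set.Ioo p.1 p.2 ∩ Set.Ioo q.1 q.2 :=
    ⟨⟨h.trans ht1, ht2.trans_le (min_le_left _ _)⟩, ⟨ht1, ht2.trans_le (min_le_right _ _)⟩⟩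
  rw [hd] at this
  exact this

lemma eq_of_fst_eq {β : IntervalPartition} {p q : ℝ × ℝ} (hp : p ∈ β.blocks) (hq : q ∈ β.blocks)
    (h : p.1 = q.1) : p = q := by
  by_contra hpq
  have hd := β.blocks_disjoint p hp q hq hpq
  have hl := β.blocks_lt q hq
  have hl' := β.blocks_lt p hp
  obtain ⟨t, ht1, ht2⟩ := exists_between (lt_min hl' (h ▸ hl : p.1 < q.2))
  have : t ∈ Set.Ioo p.1 p.2 ∩ Set.Ioo q.1 q.2 :=
    ⟨⟨ht1, ht2.trans_le (min_le_left _ _)⟩, ⟨h ▸ ht1, ht2.trans_le (min_le_right _ _)⟩⟩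
  rw [hd] at this
  exact this

lemma pairwiseDisjoint_blocks (β : IntervalPartition) :
    β.blocks.PairwiseDisjoint (fun p : ℝ × ℝ => Set.Ioo p.1 p.2) := fun p hp q hq hpq =>
  Set.disjoint_iff_inter_eq_empty.2 (β.blocks_disjoint p hp q hq hpq)

lemma volume_biUnion_finset (β : IntervalPartition) (A : Finset (ℝ × ℝ))
    (hA : ∀ p ∈ A, p ∈ β.blocks) :
    volume (⋃ p ∈ A, Set.Ioo p.1 p.2) = ENNReal.ofReal (∑ p ∈ A, mass p) := by
  rw [measure_biUnion_finset (fun p hp q hq => β.pairwiseDisjoint_blocks (hA p hp) (hA q hq))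
    (fun _ _ => measurableSet_Ioo), ENNReal.ofReal_sum_of_nonneg fun p hp => (mass_pos (hA p hp)).le]
  simp [mass]

lemma sum_mass_le (β : IntervalPartition) (A : Finset (ℝ × ℝ)) (hA : ∀ p ∈ A, p ∈ β.blocks) :
    ∑ p ∈ A, mass p ≤ β.length := by
  have h : volume (⋃ p ∈ A, Set.Ioo p.1 p.2) ≤ volume (Set.Icc 0 β.length) := by
    apply measure_mono
    refine Set.iUnion₂_subset fun p hp t ht => ?_
    have := β.blocks_sub p (hA p hp)
    exact ⟨this.1.trans ht.1.le, ht.2.le.trans this.2⟩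
  rw [β.volume_biUnion_finset A hA, Real.volume_Icc, sub_zero,
    ENNReal.ofReal_le_ofReal_iff β.length_nonneg] at h
  exact h

/-- Finitely many blocks carry all but an arbitrarily small part of the total length. -/
lemma exists_finset_sum_mass (β : IntervalPartition) {ε : ℝ} (hε : 0 < ε) :
    ∃ A : Finset (ℝ × ℝ), (∀ p ∈ A, p ∈ β.blocks) ∧ β.length - ∑ p ∈ A, mass p < ε := by
  have hc : β.blocks.Countable :=
    β.pairwiseDisjoint_blocks.countable_of_isOpen (fun _ _ => isOpen_Ioo)
      fun p hp => Set.nonempty_Ioo.2 (β.blocks_lt p hp)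
  rcases le_or_gt β.length 0 with h0 | h0
  · exact ⟨∅, by simp, by simpa using h0.trans_lt hε⟩
  have hU : ENNReal.ofReal β.length ≤ volume (⋃ p ∈ β.blocks, Set.Ioo p.1 p.2) := by
    calc ENNReal.ofReal β.length = volume (Set.Icc 0 β.length) := by simp
      _ ≤ volume ((Set.Icc 0 β.length \ ⋃ p ∈ β.blocks, Set.Ioo p.1 p.2)
            ∪ ⋃ p ∈ β.blocks, Set.Ioo p.1 p.2) := measure_mono (by simp)
      _ ≤ _ := measure_union_le _ _
      _ = _ := by rw [β.compl_null, zero_add]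
  rw [measure_biUnion hc β.pairwiseDisjoint_blocks (fun _ _ => measurableSet_Ioo),
    ENNReal.tsum_eq_iSup_sum] at hU
  have hlt : ENNReal.ofReal (β.length - ε) < ENNReal.ofReal β.length :=
    (ENNReal.ofReal_lt_ofReal_iff h0).2 (by linarith)
  obtain ⟨s, hs⟩ := lt_iSup_iff.1 (hlt.trans_le hU)
  refine ⟨s.map (Function.Embedding.subtype _), ?_, ?_⟩
  · intro p hp
    obtain ⟨q, -, rfl⟩ := Finset.mem_map.1 hp
    exact q.2
  · have e : ∑ p ∈ s, volume (Set.Ioo p.1.1 p.1.2)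
        = ENNReal.ofReal (∑ p ∈ s.map (Function.Embedding.subtype _), mass p) := by
      rw [Finset.sum_map, ENNReal.ofReal_sum_of_nonneg fun p _ => (mass_pos p.2).le]
      simp [mass]
    rw [e] at hs
    have := (ENNReal.ofReal_lt_ofReal_iff'.1 hs).1
    linarith

end IntervalPartition

open IntervalPartition

/-! ### Correspondences and the triangle inequality -/

/-- The value of `x.f` on a block, read off at the midpoint. -/
noncomputable def JPoint.val (x : JPoint) (p : ℝ × ℝ) : ℝ := x.f ((p.1 + p.2) / 2)

lemma JPoint.val_mono (x : JPoint) {p q : ℝ × ℝ} (hp : p ∈ x.part.blocks) (hq : q ∈ x.part.blocks)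
    (h : p.1 < q.1) : x.val p ≤ x.val q := by
  apply x.f_mono
  have := x.part.blocks_lt q hq
  have := snd_le_fst hp hq h
  linarith [x.part.blocks_lt p hp]

lemma JPoint.val_le (x : JPoint) {p : ℝ × ℝ} (hp : p ∈ x.part.blocks) :
    x.val p ≤ x.f x.part.length := by
  apply x.f_mono
  linarith [x.part.blocks_lt p hp, x.part.blocks_sub p hp]

/-- A correspondence of distortion at most `r`, indexed by an arbitrary finite set `S`: the pairs
are `(u i, v i)`, `i ∈ S`. Blocks are ordered through their left endpoints. -/
structure Matching (x y : JPoint) (r : ℝ) {ι : Type*} (S : Finset ι) (u v : ι → ℝ × ℝ) :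
    Prop where
  left_mem : ∀ i ∈ S, u i ∈ x.part.blocks
  right_mem : ∀ i ∈ S, v i ∈ y.part.blocks
  inj : Set.InjOn u S
  mono : ∀ i ∈ S, ∀ j ∈ S, (u i).1 < (u j).1 → (v i).1 < (v j).1
  left : ∑ i ∈ S, |mass (u i) - mass (v i)| + (x.part.length - ∑ i ∈ S, mass (u i)) ≤ r
  right : ∑ i ∈ S, |mass (u i) - mass (v i)| + (y.part.length - ∑ i ∈ S, mass (v i)) ≤ r
  val : ∀ i ∈ S, |x.val (u i) - y.val (v i)| ≤ r
  top : |x.f x.part.length - y.f y.part.length| ≤ r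

namespace Matching

variable {x y z : JPoint} {r s : ℝ} {ι κ : Type*} {S : Finset ι} {u v : ι → ℝ × ℝ}

lemma right_inj (h : Matching x y r S u v) : Set.InjOn v S := by
  intro i hi j hj e
  by_contra hij
  rcases lt_trichotomy (u i).1 (u j).1 with h1 | h1 | h1
  · have := h.mono i hi j hj h1
    rw [e] at this; exact lt_irrefl _ this
  · exact hij (h.inj hi hj (eq_of_fst_eq (h.left_mem i hi) (h.left_mem j hj) h1))
  · have := h.mono j hj i hi h1
    rw [e] at this; exact lt_irrefl _ this

lemma swap (h : Matching x y r S u v) : Matching y x r S v u where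
  left_mem := h.right_mem
  right_mem := h.left_mem
  inj := h.right_inj
  mono i hi j hj hij := by
    rcases lt_trichotomy (u i).1 (u j).1 with h1 | h1 | h1
    · exact h1
    · rw [h.inj hi hj (eq_of_fst_eq (h.left_mem i hi) (h.left_mem j hj) h1)] at hij
      exact absurd hij (lt_irrefl _)
    · exact absurd (h.mono j hj i hi h1) hij.asymm
  left := by simpa only [abs_sub_comm] using h.right
  right := by simpa only [abs_sub_comm] using h.left
  val i hi := by rw [abs_sub_comm]; exact h.val i hi
  top := by rw [abs_sub_comm]; exact h.top

lemma congr (h : Matching x y r S u v) {v' : ι → ℝ × ℝ} (hv : ∀ i ∈ S, v' i = v i) :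
    Matching x y r S u v' where
  left_mem := h.left_mem
  right_mem i hi := by rw [hv i hi]; exact h.right_mem i hi
  inj := h.inj
  mono i hi j hj := by rw [hv i hi, hv j hj]; exact h.mono i hi j hj
  left := by
    have h1 : ∑ i ∈ S, |mass (u i) - mass (v' i)| = ∑ i ∈ S, |mass (u i) - mass (v i)| :=
      Finset.sum_congr rfl fun i hi => by rw [hv i hi]
    rw [h1]; exact h.left
  right := by
    have h1 : ∑ i ∈ S, |mass (u i) - mass (v' i)| = ∑ i ∈ S, |mass (u i) - mass (v i)| :=
      Finset.sum_congr rfl fun i hi => by rw [hv i hi]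
    have h2 : ∑ i ∈ S, mass (v' i) = ∑ i ∈ S, mass (v i) :=
      Finset.sum_congr rfl fun i hi => by rw [hv i hi]
    rw [h1, h2]; exact h.right
  val i hi := by rw [hv i hi]; exact h.val i hi
  top := h.top

lemma comp_iff [DecidableEq ι] {T : Finset κ} {g : κ → ι} (hg : Set.InjOn g T) :
    Matching x y r (T.image g) u v ↔ Matching x y r T (u ∘ g) (v ∘ g) := by
  have hs : ∀ w : ι → ℝ, ∑ i ∈ T.image g, w i = ∑ k ∈ T, w (g k) :=
    fun w => Finset.sum_image hg
  constructor
  · rintro ⟨h1, h2, h3, h4, h5, h6, h7, h8⟩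
    rw [hs, hs] at h5 h6
    simp only [Finset.forall_mem_image] at h1 h2 h4 h7
    refine ⟨h1, h2, ?_, fun i hi j hj => h4 hi hj, h5, h6, h7, h8⟩
    rw [Finset.coe_image] at h3
    exact h3.comp hg (Set.mapsTo_image _ _)
  · rintro ⟨h1, h2, h3, h4, h5, h6, h7, h8⟩
    refine ⟨?_, ?_, ?_, ?_, ?_, ?_, ?_, h8⟩
    · rw [Finset.forall_mem_image]; exact fun i hi => h1 i hi
    · rw [Finset.forall_mem_image]; exact fun i hi => h2 i hi
    · rw [Finset.coe_image]; exact Set.InjOn.image_of_comp h3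
    · simp only [Finset.forall_mem_image]; exact fun i hi j hj => h4 i hi j hj
    · rw [hs, hs]; exact h5
    · rw [hs, hs]; exact h6
    · rw [Finset.forall_mem_image]; exact fun i hi => h7 i hi

/-- A matching can be indexed by its left blocks. -/
lemma exists_left (h : Matching x y r S u v) :
    ∃ (A : Finset (ℝ × ℝ)) (φ : ℝ × ℝ → ℝ × ℝ), Matching x y r A id φ := by
  classical
  refine ⟨S.image u, fun p => if hp : ∃ i ∈ S, u i = p then v hp.choose else p,
    (comp_iff h.inj).2 (h.congr fun i hi => ?_)⟩
  have hp : ∃ j ∈ S, u j = u i := ⟨i, hi, rfl⟩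
  simp only [Function.comp, dif_pos hp]
  rw [h.inj hp.choose_spec.1 hi hp.choose_spec.2]

/-- A matching can be indexed by its right blocks. -/
lemma exists_right (h : Matching x y r S u v) :
    ∃ (A : Finset (ℝ × ℝ)) (ψ : ℝ × ℝ → ℝ × ℝ), Matching x y r A ψ id :=
  let ⟨A, ψ, h'⟩ := h.swap.exists_left
  ⟨A, ψ, h'.swap⟩

end Matching

/-- The estimate behind the triangle inequality: `A` and `B` are the middle blocks used by two
correspondences, `a`, `b`, `c` the masses of the three blocks involved. A block used by the first
correspondence only costs at most `|a - b|` plus its mass `b`, which the second one pays for. -/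
lemma sum_inter_le {β : Type*} [DecidableEq β] (A B : Finset β) (a b c : β → ℝ) {L L' r s : ℝ}
    (hL : ∑ i ∈ A ∪ B, b i ≤ L') (h1 : ∑ i ∈ A, |a i - b i| + (L - ∑ i ∈ A, a i) ≤ r)
    (h2 : ∑ i ∈ B, |b i - c i| + (L' - ∑ i ∈ B, b i) ≤ s) :
    ∑ i ∈ A ∩ B, |a i - c i| + (L - ∑ i ∈ A ∩ B, a i) ≤ r + s := by
  have e1 : ∀ w : β → ℝ, ∑ i ∈ A, w i = ∑ i ∈ A ∩ B, w i + ∑ i ∈ A \ B, w i :=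
    fun w => by rw [add_comm, ← Finset.sum_sdiff (Finset.inter_subset_left : A ∩ B ⊆ A),
      Finset.sdiff_inter_self_left]
  have e2 : ∑ i ∈ A ∪ B, b i = ∑ i ∈ A \ B, b i + ∑ i ∈ B, b i := by
    rw [← Finset.sum_sdiff (Finset.subset_union_right : B ⊆ A ∪ B), Finset.union_sdiff_right]
  have e3 : ∑ i ∈ A ∩ B, |a i - c i| ≤ ∑ i ∈ A ∩ B, |a i - b i| + ∑ i ∈ A ∩ B, |b i - c i| := by
    rw [← Finset.sum_add_distrib]
    exact Finset.sum_le_sum fun i _ => abs_sub_le _ _ _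
  have e4 : ∑ i ∈ A ∩ B, |b i - c i| ≤ ∑ i ∈ B, |b i - c i| :=
    Finset.sum_le_sum_of_subset_of_nonneg Finset.inter_subset_right fun _ _ _ => abs_nonneg _
  have e5 : ∑ i ∈ A \ B, a i ≤ ∑ i ∈ A \ B, |a i - b i| + ∑ i ∈ A \ B, b i := by
    rw [← Finset.sum_add_distrib]
    exact Finset.sum_le_sum fun i _ => by linarith [le_abs_self (a i - b i)]
  rw [e1 fun i => |a i - b i|, e1 a] at h1
  linarith

namespace Matching

variable {x y z : JPoint} {r s : ℝ} {ι : Type*} {S : Finset ι} {u v : ι → ℝ × ℝ}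

/-- Composition of two matchings, kept where the middle block is used by both. -/
lemma trans {A B : Finset (ℝ × ℝ)} {ψ φ : ℝ × ℝ → ℝ × ℝ}
    (h : Matching x y r A ψ id) (h' : Matching y z s B id φ) :
    Matching x z (r + s) (A ∩ B) ψ φ := by
  have hAB : ∑ p ∈ A ∪ B, mass p ≤ y.part.length := y.part.sum_mass_le _ fun p hp =>
    (Finset.mem_union.1 hp).elim (h.right_mem p) (h'.left_mem p)
  have hA : ∀ {p}, p ∈ A ∩ B → p ∈ A := fun h => (Finset.mem_inter.1 h).1
  have hB : ∀ {p}, p ∈ A ∩ B → p ∈ B := fun h => (Finset.mem_inter.1 h).2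
  refine ⟨fun p hp => h.left_mem p (hA hp), fun p hp => h'.right_mem p (hB hp),
    h.inj.mono fun p hp => hA hp, fun p hp q hq hpq =>
      h'.mono p (hB hp) q (hB hq) (h.mono p (hA hp) q (hA hq) hpq), ?_, ?_, ?_, ?_⟩
  · exact sum_inter_le A B (fun p => mass (ψ p)) mass (fun p => mass (φ p)) hAB h.left h'.left
  · have := sum_inter_le B A (fun p => mass (φ p)) mass (fun p => mass (ψ p))
      (by rwa [Finset.union_comm]) h'.swap.left h.swap.left
    simpa only [abs_sub_comm, Finset.inter_comm, add_comm s r] using this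
  · intro p hp
    exact (abs_sub_le _ _ _).trans (add_le_add (h.val p (hA hp)) (h'.val p (hB hp)))
  · exact (abs_sub_le _ _ _).trans (add_le_add h.top h'.top)

end Matching

lemma dJ_set_bddBelow (x y : JPoint) :
    0 ∈ lowerBounds {r | ∃ n, ∃ c : Fin n → (ℝ × ℝ) × (ℝ × ℝ),
      IsCorrespondence x.part y.part n c ∧ r = jDistortion x y n c} := by
  rintro r ⟨n, c, -, rfl⟩
  exact (abs_nonneg _).trans ((le_max_right _ _).trans (le_max_right _ _))

lemma dJ_nonneg (x y : JPoint) : 0 ≤ dJ x y :=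
  Real.sInf_nonneg fun _ hr => dJ_set_bddBelow x y hr

lemma exists_matching_of_dJ_lt {x y : JPoint} {r : ℝ} (h : dJ x y < r) :
    ∃ (n : ℕ) (u v : Fin n → ℝ × ℝ), Matching x y r Finset.univ u v := by
  obtain ⟨_, ⟨n, c, hc, rfl⟩, hr⟩ := (csInf_lt_iff ⟨0, dJ_set_bddBelow x y⟩
    ⟨_, 0, fun i => i.elim0, ⟨fun i => i.elim0, fun i => i.elim0⟩, rfl⟩).1 h
  simp only [jDistortion, hausDistortion, max_lt_iff] at hr
  obtain ⟨⟨h1, h2⟩, h3, h4⟩ := hr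
  have hlt : ∀ i j : Fin n, i < j → (c i).1.1 < (c j).1.1 ∧ (c i).2.1 < (c j).2.1 :=
    fun i j hij => ⟨(x.part.blocks_lt _ (hc.1 i).1).trans_le (hc.2 i j hij).1,
      (y.part.blocks_lt _ (hc.1 i).2).trans_le (hc.2 i j hij).2⟩
  refine ⟨n, fun i => (c i).1, fun i => (c i).2, fun i _ => (hc.1 i).1, fun i _ => (hc.1 i).2,
    ?_, ?_, by linarith, by linarith, ?_, h4.le⟩
  · intro i _ j _ e
    rcases lt_trichotomy i j with hij | hij | hij
    · have := (hlt i j hij).1; simp only at e; rw [e] at this; exact absurd this (lt_irrefl _)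
    · exact hij
    · have := (hlt j i hij).1; simp only at e; rw [e] at this; exact absurd this (lt_irrefl _)
  · intro i _ j _ hij
    rcases lt_trichotomy i j with h | h | h
    · exact (hlt i j h).2
    · subst h; exact absurd hij (lt_irrefl _)
    · exact absurd (hlt j i h).1 hij.asymm
  · intro i _
    exact (le_ciSup (f := fun j => |x.f (((c j).1.1 + (c j).1.2) / 2)
      - y.f (((c j).2.1 + (c j).2.2) / 2)|) (Set.finite_range _).bddAbove i).trans h3.le

/-- A matching is turned into a correspondence by listing its pairs by left endpoint. -/
lemma Matching.dJ_le {x y : JPoint} {r : ℝ} {ι : Type*} {S : Finset ι} {u v : ι → ℝ × ℝ}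
    (h : Matching x y r S u v) : dJ x y ≤ r := by
  classical
  have hr : 0 ≤ r := (abs_nonneg _).trans h.top
  have hk : Set.InjOn (fun i => (u i).1) S := fun i hi j hj e =>
    h.inj hi hj (eq_of_fst_eq (h.left_mem i hi) (h.left_mem j hj) e)
  set K := S.image fun i => (u i).1 with hK
  have hmem : ∀ j : Fin K.card, ∃ i ∈ S, (u i).1 = K.orderEmbOfFin rfl j := fun j =>
    Finset.mem_image.1 (K.orderEmbOfFin_mem rfl j)
  choose e heS he using hmem
  have hinj : Function.Injective e := fun i j hij =>
    (K.orderEmbOfFin rfl).injective (by rw [← he, ← he, hij])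
  have himg : Finset.univ.image e = S := by
    apply Finset.eq_of_subset_of_card_le
    · exact fun i hi => by
        obtain ⟨j, -, rfl⟩ := Finset.mem_image.1 hi
        exact heS j
    · rw [Finset.card_image_of_injective _ hinj, Finset.card_univ, Fintype.card_fin, hK,
        Finset.card_image_of_injOn hk]
  have h' := (comp_iff (u := u) (v := v) (x := x) (y := y) (r := r) hinj.injOn).1
    (himg.symm ▸ h)
  refine csInf_le_of_le ⟨0, dJ_set_bddBelow x y⟩
    ⟨K.card, fun j => (u (e j), v (e j)), ⟨fun j => ⟨h.left_mem _ (heS j), h.right_mem _ (heS j)⟩,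
      fun i j hij => ?_⟩, rfl⟩ ?_
  · have h1 : (u (e i)).1 < (u (e j)).1 := by
      rw [he, he]; exact (K.orderEmbOfFin rfl).strictMono hij
    exact ⟨snd_le_fst (h.left_mem _ (heS i)) (h.left_mem _ (heS j)) h1,
      snd_le_fst (h.right_mem _ (heS i)) (h.right_mem _ (heS j))
        (h.mono _ (heS i) _ (heS j) h1)⟩
  · have hl := h'.left
    have hr' := h'.right
    simp only [Function.comp] at hl hr'
    refine max_le (max_le (by simp only; linarith) (by simp only; linarith))
      (max_le (Real.iSup_le (fun j => h.val _ (heS j)) hr) h.top)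

lemma dJ_triangle (x y z : JPoint) : dJ x z ≤ dJ x y + dJ y z := by
  refine le_of_forall_pos_le_add fun ε hε => ?_
  obtain ⟨n, u, v, h⟩ := exists_matching_of_dJ_lt (lt_add_of_pos_right (dJ x y) (half_pos hε))
  obtain ⟨m, u', v', h'⟩ := exists_matching_of_dJ_lt (lt_add_of_pos_right (dJ y z) (half_pos hε))
  obtain ⟨A, ψ, hA⟩ := h.exists_right
  obtain ⟨B, φ, hB⟩ := h'.exists_left
  linarith [(hA.trans hB).dJ_le]

/-! ### Labelling blocks by rational numbers -/

/-- `Labelled β S u`: the finite set `S` of rational labels carries blocks `u q` of `β`, in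
increasing order. -/
def Labelled (β : IntervalPartition) (S : Finset ℚ) (u : ℚ → ℝ × ℝ) : Prop :=
  (∀ q ∈ S, u q ∈ β.blocks) ∧ ∀ p ∈ S, ∀ q ∈ S, p < q → (u p).1 < (u q).1

namespace Labelled

variable {β : IntervalPartition} {S : Finset ℚ} {u : ℚ → ℝ × ℝ}

lemma injOn (h : Labelled β S u) : Set.InjOn u S := by
  intro p hp q hq e
  rcases lt_trichotomy p q with h1 | h1 | h1
  · have := h.2 p hp q hq h1; rw [e] at this; exact absurd this (lt_irrefl _)
  · exact h1
  · have := h.2 q hq p hp h1; rw [e] at this; exact absurd this (lt_irrefl _)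

lemma lt_of_fst_lt (h : Labelled β S u) {p q : ℚ} (hp : p ∈ S) (hq : q ∈ S)
    (hpq : (u p).1 < (u q).1) : p < q := by
  rcases lt_trichotomy p q with h1 | h1 | h1
  · exact h1
  · subst h1; exact absurd hpq (lt_irrefl _)
  · exact absurd (h.2 q hq p hp h1) hpq.asymm

lemma sum_mass_le (h : Labelled β S u) : ∑ q ∈ S, mass (u q) ≤ β.length := by
  classical
  rw [← Finset.sum_image (f := mass) h.injOn]
  exact β.sum_mass_le _ fun p hp => by
    obtain ⟨q, hq, rfl⟩ := Finset.mem_image.1 hp; exact h.1 q hq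

/-- A labelling can be extended to finitely many further blocks, since `ℚ` is a dense order
without endpoints. -/
lemma extend (h : Labelled β S u) (A : Finset (ℝ × ℝ)) (hA : ∀ p ∈ A, p ∈ β.blocks) :
    ∃ S' u', Labelled β S' u' ∧ S ⊆ S' ∧ (∀ q ∈ S, u' q = u q) ∧ ∀ p ∈ A, ∃ q ∈ S', u' q = p := by
  classical
  induction A using Finset.induction_on with
  | empty => exact ⟨S, u, h, subset_rfl, fun _ _ => rfl, by simp⟩
  | insert V A hV ih =>
    obtain ⟨S', u', hl, hS, hu, hp⟩ := ih fun p hp => hA p (Finset.mem_insert_of_mem hp)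
    have hVβ := hA V (Finset.mem_insert_self _ _)
    by_cases hex : ∃ q ∈ S', u' q = V
    · refine ⟨S', u', hl, hS, hu, fun p hpA => ?_⟩
      rcases Finset.mem_insert.1 hpA with rfl | h1
      exacts [hex, hp p h1]
    push Not at hex
    obtain ⟨t, ht1, ht2⟩ := Order.exists_between_finsets
      (lo := S'.filter fun q => (u' q).1 < V.1) (hi := S'.filter fun q => V.1 < (u' q).1)
      (fun p hp q hq => hl.lt_of_fst_lt (Finset.mem_filter.1 hp).1 (Finset.mem_filter.1 hq).1
        ((Finset.mem_filter.1 hp).2.trans (Finset.mem_filter.1 hq).2))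
    have hcmp : ∀ q ∈ S', ((u' q).1 < V.1 ∧ q < t) ∨ (V.1 < (u' q).1 ∧ t < q) := by
      intro q hq
      rcases lt_trichotomy (u' q).1 V.1 with h1 | h1 | h1
      · exact Or.inl ⟨h1, ht1 q (Finset.mem_filter.2 ⟨hq, h1⟩)⟩
      · exact absurd (eq_of_fst_eq (hl.1 q hq) hVβ h1) (hex q hq)
      · exact Or.inr ⟨h1, ht2 q (Finset.mem_filter.2 ⟨hq, h1⟩)⟩
    have htS : t ∉ S' := fun ht => by
      rcases hcmp t ht with h1 | h1 <;> exact lt_irrefl _ h1.2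
    have hne : ∀ q ∈ S', Function.update u' t V q = u' q := fun q hq =>
      Function.update_of_ne (fun e : q = t => htS (e ▸ hq)) _ _
    refine ⟨insert t S', Function.update u' t V, ⟨?_, ?_⟩, hS.trans (Finset.subset_insert _ _),
      fun q hq => (hne q (hS hq)).trans (hu q hq), ?_⟩
    · intro q hq
      rcases Finset.mem_insert.1 hq with rfl | hq
      · simpa using hVβ
      · rw [hne q hq]; exact hl.1 q hq
    · intro p hp q hq hpq
      rcases Finset.mem_insert.1 hp with hp' | hp' <;>
        rcases Finset.mem_insert.1 hq with hq' | hq'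
      · exact absurd (hp'.trans hq'.symm) hpq.ne
      · rw [hne q hq', hp', Function.update_self]
        exact (hcmp q hq').elim (fun h1 => absurd h1.2 (hp' ▸ hpq).asymm) fun h1 => h1.1
      · rw [hne p hp', hq', Function.update_self]
        exact (hcmp p hp').elim (fun h1 => h1.1) fun h1 => absurd h1.2 (hq' ▸ hpq).asymm
      · rw [hne p hp', hne q hq']; exact hl.2 p hp' q hq' hpq
    · intro p hpA
      rcases Finset.mem_insert.1 hpA with rfl | hpA
      · exact ⟨t, Finset.mem_insert_self _ _, Function.update_self ..⟩
      · obtain ⟨q, hq, rfl⟩ := hp p hpA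
        exact ⟨q, Finset.mem_insert_of_mem hq, hne q hq⟩

end Labelled

/-! ### Points of `J` with prescribed masses and values -/

/-- Abstract data of a point of `J`: blocks are labelled by rational numbers in increasing order,
the block with label `q` has mass `m q` (labels with `m q = 0` carry no block) and value `F q`,
and `c` is the value at infinity. -/
@[ext]
structure MassData where
  m : ℚ → ℝ
  F : ℚ → ℝ
  c : ℝ
  m_nonneg : ∀ q, 0 ≤ m q
  m_summable : Summable m
  F_nonneg : ∀ q, 0 < m q → 0 ≤ F q
  F_mono : ∀ p q, 0 < m p → 0 < m q → p < q → F p ≤ F q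
  F_le : ∀ q, 0 < m q → F q ≤ c
  c_nonneg : 0 ≤ c

namespace MassData

variable (d : MassData)

/-- The left endpoint of the block with label `q`: the total mass of the smaller labels. -/
noncomputable def left (q : ℚ) : ℝ := ∑' p, (Set.Iio q).indicator d.m p

lemma left_nonneg (q : ℚ) : 0 ≤ d.left q :=
  tsum_nonneg fun p => Set.indicator_nonneg (fun p _ => d.m_nonneg p) p

lemma left_add (q : ℚ) : d.left q + d.m q = ∑' p, (Set.Iic q).indicator d.m p := by
  have h1 : d.m q = ∑' p, (Set.indicator {q} d.m p) := by
    rw [tsum_eq_single q]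
    · simp
    · intro p hp; simp [hp]
  rw [left, h1, ← (d.m_summable.indicator _).tsum_add (d.m_summable.indicator _)]
  congr 1; ext p
  rw [← Iio_union_right (a := q), Set.indicator_union_of_disjoint (by simp)]

lemma left_add_le {p q : ℚ} (h : p < q) : d.left p + d.m p ≤ d.left q := by
  rw [left_add]
  exact (d.m_summable.indicator _).tsum_le_tsum (fun t =>
    Set.indicator_le_indicator_of_subset (fun s hs => lt_of_le_of_lt hs h) d.m_nonneg t)
    (d.m_summable.indicator _)

lemma left_add_le_tsum (q : ℚ) : d.left q + d.m q ≤ ∑' p, d.m p := by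
  rw [left_add]
  exact (d.m_summable.indicator _).tsum_le_tsum (fun t =>
    Set.indicator_le_self' (fun s _ => d.m_nonneg s) t) d.m_summable

lemma disjoint_Ioo {p q : ℚ} (h : p ≠ q) :
    Disjoint (Set.Ioo (d.left p) (d.left p + d.m p)) (Set.Ioo (d.left q) (d.left q + d.m q)) := by
  rw [Set.disjoint_left]
  rintro t ⟨h1, h2⟩ ⟨h3, h4⟩
  rcases h.lt_or_gt with h | h <;> have := d.left_add_le h <;> linarith

/-- The interval partition with the prescribed block masses, in the prescribed order. -/
noncomputable def part : IntervalPartition where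
  length := ∑' q, d.m q
  length_nonneg := tsum_nonneg d.m_nonneg
  blocks := {b | ∃ q, 0 < d.m q ∧ b = (d.left q, d.left q + d.m q)}
  blocks_lt := by rintro _ ⟨q, hq, rfl⟩; simpa using hq
  blocks_sub := by rintro _ ⟨q, hq, rfl⟩; exact ⟨d.left_nonneg q, d.left_add_le_tsum q⟩
  blocks_disjoint := by
    rintro _ ⟨p, hp, rfl⟩ _ ⟨q, hq, rfl⟩ h
    exact Set.disjoint_iff_inter_eq_empty.1 (d.disjoint_Ioo fun e => h (by rw [e]))
  compl_null := by
    set U := ⋃ b ∈ {b | ∃ q, 0 < d.m q ∧ b = (d.left q, d.left q + d.m q)}, Set.Ioo b.1 b.2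
      with hUdef
    have hU : U = ⋃ q, Set.Ioo (d.left q) (d.left q + d.m q) := by
      ext t
      simp only [hUdef, Set.mem_iUnion, Set.mem_ofPred_eq, exists_prop]
      constructor
      · rintro ⟨_, ⟨q, -, rfl⟩, ht⟩; exact ⟨q, ht⟩
      · rintro ⟨q, ht⟩
        exact ⟨_, ⟨q, by linarith [ht.1, ht.2], rfl⟩, ht⟩
    have hm : MeasurableSet U := by
      rw [hU]; exact MeasurableSet.iUnion fun _ => measurableSet_Ioo
    have hv : volume U = ENNReal.ofReal (∑' q, d.m q) := by
      rw [hU, measure_iUnion (fun p q h => d.disjoint_Ioo h) (fun _ => measurableSet_Ioo),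
        ENNReal.ofReal_tsum_of_nonneg d.m_nonneg d.m_summable]
      simp
    have hsub : U ⊆ Set.Icc 0 (∑' q, d.m q) := by
      rw [hU]
      refine Set.iUnion_subset fun q t ht => ⟨(d.left_nonneg q).trans ht.1.le,
        ht.2.le.trans (d.left_add_le_tsum q)⟩
    rw [measure_sdiff hsub hm.nullMeasurableSet (by rw [hv]; exact ENNReal.ofReal_ne_top), hv]
    simp

/-- The values competing in the definition of `d.fn t`: the value at infinity and those of the
blocks ending after `t`. -/
def vals (t : ℝ) : Set ℝ := insert d.c {y | ∃ q, 0 < d.m q ∧ t < d.left q + d.m q ∧ y = d.F q}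

/-- The increasing right-continuous function taking the value `F q` on the block with label `q`
and the value `c` at infinity. -/
noncomputable def fn (t : ℝ) : ℝ := sInf (d.vals t)

lemma vals_nonneg {t y : ℝ} (hy : y ∈ d.vals t) : 0 ≤ y := by
  rcases hy with rfl | ⟨q, hq, -, rfl⟩
  exacts [d.c_nonneg, d.F_nonneg q hq]

lemma bddBelow_vals (t : ℝ) : BddBelow (d.vals t) := ⟨0, fun _ hy => d.vals_nonneg hy⟩

lemma vals_nonempty (t : ℝ) : (d.vals t).Nonempty := ⟨_, Set.mem_insert _ _⟩

lemma vals_anti {s t : ℝ} (h : s ≤ t) : d.vals t ⊆ d.vals s := by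
  rintro _ (rfl | ⟨q, hq, hl, rfl⟩)
  exacts [Or.inl rfl, Or.inr ⟨q, hq, h.trans_lt hl, rfl⟩]

lemma fn_mono : Monotone d.fn := fun _ _ h =>
  csInf_le_csInf (d.bddBelow_vals _) (d.vals_nonempty _) (d.vals_anti h)

lemma fn_eq {q : ℚ} (hq : 0 < d.m q) {t : ℝ}
    (ht : t ∈ Set.Ioo (d.left q) (d.left q + d.m q)) : d.fn t = d.F q := by
  apply le_antisymm
  · exact csInf_le (d.bddBelow_vals _) (Or.inr ⟨q, hq, ht.2, rfl⟩)
  · refine le_csInf (d.vals_nonempty _) ?_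
    rintro _ (rfl | ⟨p, hp, hl, rfl⟩)
    · exact d.F_le q hq
    · rcases lt_trichotomy p q with h | h | h
      · linarith [d.left_add_le h, ht.1]
      · rw [h]
      · exact d.F_mono q p hq hp h

lemma fn_top {t : ℝ} (ht : ∑' q, d.m q ≤ t) : d.fn t = d.c := by
  have : d.vals t = {d.c} := by
    ext y
    constructor
    · rintro (rfl | ⟨q, hq, hl, rfl⟩)
      · rfl
      · linarith [d.left_add_le_tsum q]
    · rintro rfl; exact Or.inl rfl
  rw [fn, this, csInf_singleton]

lemma fn_rightCont (t : ℝ) : ContinuousWithinAt d.fn (Set.Ici t) t := by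
  refine tendsto_order.2 ⟨fun a ha => ?_, fun a ha => ?_⟩
  · filter_upwards [self_mem_nhdsWithin] with s hs using ha.trans_le (d.fn_mono hs)
  · obtain ⟨y, hy, hya⟩ := exists_lt_of_csInf_lt (d.vals_nonempty t) ha
    rcases hy with rfl | ⟨q, hq, hl, rfl⟩
    · exact Eventually.of_forall fun s =>
        (csInf_le (d.bddBelow_vals s) (Set.mem_insert _ _)).trans_lt hya
    · filter_upwards [mem_nhdsWithin_of_mem_nhds (Iio_mem_nhds hl)] with s hs
      exact (csInf_le (d.bddBelow_vals s) (Or.inr ⟨q, hq, hs, rfl⟩)).trans_lt hya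

/-- The point of `J` described by `d`. -/
noncomputable def toJ : JPoint where
  part := d.part
  f := d.fn
  f_nonneg t := Real.sInf_nonneg fun _ hy => d.vals_nonneg hy
  f_mono := d.fn_mono
  f_rightCont := d.fn_rightCont
  f_const_block := by
    rintro _ ⟨q, hq, rfl⟩ s hs t ht
    rw [d.fn_eq hq hs, d.fn_eq hq ht]
  f_const_top t ht := by rw [d.fn_top ht]; exact (d.fn_top le_rfl).symm
  f_const_neg t ht := by
    have : d.vals t = d.vals 0 := by
      refine Set.Subset.antisymm ?_ (d.vals_anti ht)
      rintro _ (rfl | ⟨q, hq, hl, rfl⟩)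
      exacts [Or.inl rfl, Or.inr ⟨q, hq, by linarith [d.left_nonneg q], rfl⟩]
    rw [fn, fn, this]

/-- The basic estimate: distance from `x` to `d.toJ`, through a labelling of blocks of `x`. Labels
with `d.m q = 0` may occur in `S`, and contribute the mass of their block. -/
lemma dJ_toJ_le {x : JPoint} {S : Finset ℚ} {u : ℚ → ℝ × ℝ} {r : ℝ} (h : Labelled x.part S u)
    (h1 : ∑ q ∈ S, |mass (u q) - d.m q| + (x.part.length - ∑ q ∈ S, mass (u q)) ≤ r)
    (h2 : ∑ q ∈ S, |mass (u q) - d.m q| + (∑' q, d.m q - ∑ q ∈ S, d.m q) ≤ r)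
    (h3 : ∀ q ∈ S, 0 < d.m q → |x.val (u q) - d.F q| ≤ r)
    (h4 : |x.f x.part.length - d.c| ≤ r) : dJ x d.toJ ≤ r := by
  classical
  set T := S.filter fun q => 0 < d.m q with hT
  have hTS : ∀ {q}, q ∈ T → q ∈ S ∧ 0 < d.m q := fun h => Finset.mem_filter.1 h
  have hm : ∀ q, mass (d.left q, d.left q + d.m q) = d.m q := fun q => by simp [mass]
  have hz : ∀ q ∈ S, ¬ 0 < d.m q → d.m q = 0 := fun q _ hq =>
    le_antisymm (not_lt.1 hq) (d.m_nonneg q)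
  have e1 : ∀ w : ℚ → ℝ, ∑ q ∈ S, w q = ∑ q ∈ T, w q + ∑ q ∈ S with ¬ 0 < d.m q, w q := fun w =>
    (Finset.sum_filter_add_sum_filter_not S _ w).symm
  have e2 : ∑ q ∈ S with ¬ 0 < d.m q, d.m q = 0 := Finset.sum_eq_zero fun q hq =>
    hz q (Finset.mem_filter.1 hq).1 (Finset.mem_filter.1 hq).2
  have e3 : ∑ q ∈ S with ¬ 0 < d.m q, |mass (u q) - d.m q|
      = ∑ q ∈ S with ¬ 0 < d.m q, mass (u q) := Finset.sum_congr rfl fun q hq => by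
    obtain ⟨hq1, hq2⟩ := Finset.mem_filter.1 hq
    rw [hz q hq1 hq2, sub_zero, abs_of_pos (mass_pos (h.1 q hq1))]
  have e4 : 0 ≤ ∑ q ∈ S with ¬ 0 < d.m q, |mass (u q) - d.m q| :=
    Finset.sum_nonneg fun _ _ => abs_nonneg _
  rw [e1 fun q => |mass (u q) - d.m q|, e1] at h1 h2
  refine Matching.dJ_le (S := T) (u := u) (v := fun q => (d.left q, d.left q + d.m q))
    ⟨fun q hq => h.1 q (hTS hq).1, fun q hq => ⟨q, (hTS hq).2, rfl⟩,
      h.injOn.mono fun q hq => (hTS hq).1, ?_, ?_, ?_, ?_, ?_⟩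
  · intro p hp q hq hpq
    have := d.left_add_le (h.lt_of_fst_lt (hTS hp).1 (hTS hq).1 hpq)
    have := (hTS hp).2
    simp only; linarith
  · simp only [hm]; linarith
  · simp only [hm]
    change _ + (∑' q, d.m q - _) ≤ r
    linarith
  · intro q hq
    have hq' := (hTS hq).2
    have : d.toJ.val (d.left q, d.left q + d.m q) = d.F q :=
      d.fn_eq hq' ⟨by simp only; linarith, by simp only; linarith⟩
    rw [this]; exact h3 q (hTS hq).1 hq'
  · have : d.toJ.f d.toJ.part.length = d.c := d.fn_top le_rfl
    rw [this]; exact h4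

end MassData

/-! ### A countable dense set -/

/-- The points of `J` described by finitely many labels and rational data. -/
def rationalPoints : Set JPoint :=
  MassData.toJ '' {d | ∃ (m F : ℚ →₀ ℚ) (c : ℚ), (d.m = fun q => (m q : ℝ)) ∧
    (d.F = fun q => (F q : ℝ)) ∧ d.c = c}

lemma rationalPoints_countable : rationalPoints.Countable := by
  apply Set.Countable.image
  have : {d : MassData | ∃ (m F : ℚ →₀ ℚ) (c : ℚ), (d.m = fun q => (m q : ℝ)) ∧
      (d.F = fun q => (F q : ℝ)) ∧ d.c = c} =
      ⋃ t : (ℚ →₀ ℚ) × (ℚ →₀ ℚ) × ℚ, {d : MassData | (d.m = fun q => (t.1 q : ℝ)) ∧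
        (d.F = fun q => (t.2.1 q : ℝ)) ∧ d.c = t.2.2} := by
    ext d
    simp only [Set.mem_iUnion, Prod.exists]
    rfl
  rw [this]
  refine Set.countable_iUnion fun t => Set.Subsingleton.countable ?_
  rintro d ⟨h1, h2, h3⟩ d' ⟨h1', h2', h3'⟩
  exact MassData.ext (h1.trans h1'.symm) (h2.trans h2'.symm) (h3.trans h3'.symm)

/-- Density of `rationalPoints`: keep finitely many blocks carrying almost all the mass, and round
masses up and values down to multiples of `1 / N`. -/
lemma exists_rationalPoint (x : JPoint) {ε : ℝ} (hε : 0 < ε) :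
    ∃ y ∈ rationalPoints, dJ x y < ε := by
  classical
  obtain ⟨A, hA, hAε⟩ := x.part.exists_finset_sum_mass (show 0 < ε / 4 by linarith)
  obtain ⟨S, u, hl, -, -, hAS⟩ := Labelled.extend (β := x.part) (S := ∅) (u := fun _ => 0)
    ⟨by simp, by simp⟩ A hA
  have hsum : x.part.length - ∑ q ∈ S, mass (u q) < ε / 4 := by
    have : ∑ p ∈ A, mass p ≤ ∑ p ∈ S.image u, mass p := by
      refine Finset.sum_le_sum_of_subset_of_nonneg (fun p hp => ?_) fun p hp _ => ?_
      · obtain ⟨q, hq, rfl⟩ := hAS p hp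
        exact Finset.mem_image_of_mem _ hq
      · obtain ⟨q, hq, rfl⟩ := Finset.mem_image.1 hp
        exact (mass_pos (hl.1 q hq)).le
    rw [Finset.sum_image hl.injOn] at this
    linarith
  obtain ⟨N, hN⟩ := exists_nat_gt ((S.card + 1) / (ε / 4))
  have hN0 : (0 : ℝ) < N := lt_of_le_of_lt (by positivity) hN
  have hNε : (S.card + 1) * (1 / (N : ℝ)) < ε / 4 := by
    rw [div_lt_iff₀ (by linarith)] at hN
    rw [mul_one_div, div_lt_iff₀ hN0]; linarith
  have hfl : ∀ t : ℝ, |t - ⌊t * N⌋ / N| ≤ 1 / N := fun t => by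
    have e : t - ⌊t * N⌋ / N = (t * N - ⌊t * N⌋) / N := by field_simp
    rw [e, abs_div, abs_of_pos hN0]
    gcongr
    rw [abs_of_nonneg (by linarith [Int.floor_le (t * N)])]
    linarith [Int.lt_floor_add_one (t * N)]
  have hce : ∀ t : ℝ, |t - ⌈t * N⌉ / N| ≤ 1 / N := fun t => by
    have e : t - ⌈t * N⌉ / N = (t * N - ⌈t * N⌉) / N := by field_simp
    rw [e, abs_div, abs_of_pos hN0]
    gcongr
    rw [abs_of_nonpos (by linarith [Int.le_ceil (t * N)])]
    linarith [Int.ceil_lt_add_one (t * N)]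
  have hflm : ∀ s t : ℝ, s ≤ t → (⌊s * N⌋ : ℝ) / N ≤ ⌊t * N⌋ / N := fun s t h => by
    gcongr
  have hfl0 : ∀ t : ℝ, 0 ≤ t → (0 : ℝ) ≤ ⌊t * N⌋ / N := fun t h => by
    have : (0 : ℤ) ≤ ⌊t * N⌋ := Int.floor_nonneg.2 (by positivity)
    have : (0 : ℝ) ≤ ⌊t * N⌋ := by exact_mod_cast this
    positivity
  have hce0 : ∀ t : ℝ, 0 ≤ t → (0 : ℝ) ≤ ⌈t * N⌉ / N := fun t h => by
    have : (0 : ℤ) ≤ ⌈t * N⌉ := Int.ceil_nonneg (by positivity)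
    have : (0 : ℝ) ≤ ⌈t * N⌉ := by exact_mod_cast this
    positivity
  set m : ℚ → ℝ := fun q => if q ∈ S then (⌈mass (u q) * N⌉ : ℝ) / N else 0 with hm
  set F : ℚ → ℝ := fun q => if q ∈ S then (⌊x.val (u q) * N⌋ : ℝ) / N else 0 with hF
  have hmS : ∀ q ∈ S, m q = (⌈mass (u q) * N⌉ : ℝ) / N := fun q hq => by simp [hm, hq]
  have hFS : ∀ q ∈ S, F q = (⌊x.val (u q) * N⌋ : ℝ) / N := fun q hq => by simp [hF, hq]
  have hmem : ∀ q, 0 < m q → q ∈ S := fun q hq => by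
    by_contra h; simp [hm, h] at hq
  let d : MassData :=
    { m := m
      F := F
      c := ⌊x.f x.part.length * N⌋ / N
      m_nonneg := fun q => by
        by_cases hq : q ∈ S
        · rw [hmS q hq]; exact hce0 _ (mass_pos (hl.1 q hq)).le
        · simp [hm, hq]
      m_summable := summable_of_ne_finset_zero (s := S) fun q hq => by simp [hm, hq]
      F_nonneg := fun q hq => by
        rw [hFS q (hmem q hq)]; exact hfl0 _ (x.f_nonneg _)
      F_mono := fun p q hp hq hpq => by
        have hp := hmem p hp
        have hq := hmem q hq
        rw [hFS p hp, hFS q hq]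
        exact hflm _ _ (x.val_mono (hl.1 p hp) (hl.1 q hq) (hl.2 p hp q hq hpq))
      F_le := fun q hq => by
        have hq := hmem q hq
        rw [hFS q hq]
        exact hflm _ _ (x.val_le (hl.1 q hq))
      c_nonneg := hfl0 _ (x.f_nonneg _) }
  refine ⟨d.toJ, ⟨d, ⟨Finsupp.onFinset S (fun q => if q ∈ S then (⌈mass (u q) * N⌉ : ℚ) / N else 0)
    (fun q hq => by by_contra h; simp [h] at hq),
    Finsupp.onFinset S (fun q => if q ∈ S then (⌊x.val (u q) * N⌋ : ℚ) / N else 0)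
    (fun q hq => by by_contra h; simp [h] at hq), (⌊x.f x.part.length * N⌋ : ℚ) / N, ?_, ?_, ?_⟩,
    rfl⟩, ?_⟩
  · funext q
    change m q = _
    simp only [hm, Finsupp.onFinset_apply]
    split_ifs <;> push_cast <;> rfl
  · funext q
    change F q = _
    simp only [hF, Finsupp.onFinset_apply]
    split_ifs <;> push_cast <;> rfl
  · change (_ : ℝ) / _ = _
    push_cast; rfl
  have h1N : 1 / (N : ℝ) ≤ (S.card + 1) * (1 / (N : ℝ)) :=
    le_mul_of_one_le_left (by positivity) (by linarith [(Nat.cast_nonneg S.card : (0 : ℝ) ≤ _)])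
  have hSm : ∑ q ∈ S, |mass (u q) - m q| ≤ ε / 4 := by
    have : ∑ q ∈ S, |mass (u q) - m q| ≤ ∑ _q ∈ S, 1 / (N : ℝ) :=
      Finset.sum_le_sum fun q hq => by rw [hmS q hq]; exact hce _
    rw [Finset.sum_const, nsmul_eq_mul] at this
    have : (0 : ℝ) ≤ 1 / N := by positivity
    linarith
  have htsum : ∑' q, d.m q = ∑ q ∈ S, d.m q :=
    tsum_eq_sum fun q hq => by change m q = 0; simp [hm, hq]
  refine (d.dJ_toJ_le hl (r := ε / 2) ?_ ?_ ?_ ?_).trans_lt (by linarith)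
  · change ∑ q ∈ S, |mass (u q) - m q| + _ ≤ _
    linarith
  · rw [htsum, sub_self, add_zero]
    change ∑ q ∈ S, |mass (u q) - m q| ≤ _
    linarith
  · intro q hq _
    change |_ - F q| ≤ _
    rw [hFS q hq]
    exact (hfl _).trans (by linarith)
  · exact (hfl _).trans (by linarith)

/-! ### Limits of fast Cauchy sequences -/

/-- The correspondences between successive points of a sequence can all be realised as equality of
rational labels: `T n` is the set of labels that are matched between the times `n` and `n + 1`. -/
lemma exists_labelling (x : ℕ → JPoint) (r : ℕ → ℝ) (h : ∀ n, dJ (x n) (x (n + 1)) < r n) :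
    ∃ (S T : ℕ → Finset ℚ) (u : ℕ → ℚ → ℝ × ℝ), (∀ n, Labelled (x n).part (S n) (u n)) ∧
      (∀ n, T n ⊆ S n) ∧ (∀ n, T n ⊆ S (n + 1)) ∧
      ∀ n, Matching (x n) (x (n + 1)) (r n) (T n) (u n) (u (n + 1)) := by
  classical
  have hA : ∀ n, ∃ (A : Finset (ℝ × ℝ)) (φ : ℝ × ℝ → ℝ × ℝ),
      Matching (x n) (x (n + 1)) (r n) A id φ := fun n => by
    obtain ⟨k, u, v, hm⟩ := exists_matching_of_dJ_lt (h n)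
    exact hm.exists_left
  choose A φ hA using hA
  let P : ℕ → Finset ℚ × (ℚ → ℝ × ℝ) → Prop := fun n s =>
    Labelled (x n).part s.1 s.2 ∧ ∀ p ∈ A n, ∃ q ∈ s.1, s.2 q = p
  let t : ℕ → Finset ℚ × (ℚ → ℝ × ℝ) → Finset ℚ := fun n s => s.1.filter fun q => s.2 q ∈ A n
  have hstep : ∀ n s, P n s → ∃ s', P (n + 1) s' ∧ t n s ⊆ s'.1 ∧
      Matching (x n) (x (n + 1)) (r n) (t n s) s.2 s'.2 := by
    rintro n ⟨S, u⟩ ⟨hl, hcov⟩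
    have htS : ∀ {q}, q ∈ t n (S, u) → q ∈ S ∧ u q ∈ A n := fun h => Finset.mem_filter.1 h
    have himg : (t n (S, u)).image u = A n := by
      ext p
      rw [Finset.mem_image]
      constructor
      · rintro ⟨q, hq, rfl⟩; exact (htS hq).2
      · intro hp
        obtain ⟨q, hq, rfl⟩ := hcov p hp
        exact ⟨q, Finset.mem_filter.2 ⟨hq, hp⟩, rfl⟩
    have hm : Matching (x n) (x (n + 1)) (r n) (t n (S, u)) (id ∘ u) (φ n ∘ u) :=
      (Matching.comp_iff (hl.injOn.mono fun q hq => (htS hq).1)).1 (himg.symm ▸ hA n)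
    have hl' : Labelled (x (n + 1)).part (t n (S, u)) (φ n ∘ u) :=
      ⟨hm.right_mem, fun p hp q hq hpq =>
        hm.mono p hp q hq (hl.2 p (htS hp).1 q (htS hq).1 hpq)⟩
    obtain ⟨S', u', h1, h2, h3, h4⟩ := hl'.extend (A (n + 1)) (hA (n + 1)).left_mem
    exact ⟨(S', u'), ⟨h1, h4⟩, h2, hm.congr h3⟩
  obtain ⟨s₀, hs₀⟩ : ∃ s, P 0 s := by
    obtain ⟨S', u', h1, -, -, h4⟩ := Labelled.extend (β := (x 0).part) (S := ∅) (u := fun _ => 0)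
      ⟨by simp, by simp⟩ (A 0) (hA 0).left_mem
    exact ⟨(S', u'), h1, h4⟩
  choose! g hgP hgt hgm using hstep
  let s : ℕ → Finset ℚ × (ℚ → ℝ × ℝ) := fun n => Nat.rec s₀ g n
  have hP : ∀ n, P n (s n) := fun n => by
    induction n with
    | zero => exact hs₀
    | succ n ih => exact hgP n _ ih
  exact ⟨fun n => (s n).1, fun n => t n (s n), fun n => (s n).2, fun n => (hP n).1,
    fun n => Finset.filter_subset _ _, fun n => hgt n _ (hP n), fun n => hgm n _ (hP n)⟩

/-- Limit of a fast Cauchy sequence. Once the correspondences are equality of labels, the masses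
form a Cauchy sequence in `ℓ¹(ℚ)`, and the values converge on every label of positive limit
mass. -/
lemma exists_limit (x : ℕ → JPoint) (h : ∀ n, dJ (x n) (x (n + 1)) < (1 / 2) ^ n) :
    ∃ y, ∀ n, dJ (x n) y ≤ 5 * (1 / 2) ^ n := by
  classical
  obtain ⟨S, T, u, hl, hTS, hTS', hm⟩ := exists_labelling x _ h
  set ρ : ℕ → ℝ := fun n => (1 / 2) ^ n with hρ
  have hρpos : ∀ n, 0 < ρ n := fun n => by positivity
  have hρs : ∀ n, ρ n = 2 * ρ (n + 1) := fun n => by simp only [hρ, pow_succ]; ring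
  have hρ0 : Tendsto ρ atTop (𝓝 0) :=
    tendsto_pow_atTop_nhds_zero_of_lt_one (by norm_num) (by norm_num)
  -- `M n q` is the mass carried by the label `q` at time `n`
  set M : ℕ → ℚ → ℝ := fun n q => if q ∈ S n then mass (u n q) else 0 with hM
  have hMS : ∀ n, ∀ q ∈ S n, M n q = mass (u n q) := fun n q hq => by simp [hM, hq]
  have hM0 : ∀ n q, 0 ≤ M n q := fun n q => by
    by_cases hq : q ∈ S n
    · rw [hMS n q hq]; exact (mass_pos ((hl n).1 q hq)).le
    · simp [hM, hq]
  have hMK : ∀ n (K : Finset ℚ), ∑ q ∈ K, M n q ≤ ∑ q ∈ S n, M n q := fun n K => by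
    rw [Finset.sum_subset (Finset.subset_union_right : S n ⊆ K ∪ S n)
      fun q _ hq => by simp [hM, hq]]
    exact Finset.sum_le_sum_of_subset_of_nonneg Finset.subset_union_left fun q _ _ => hM0 n q
  -- `δ n q` is the cost of the label `q` at step `n`
  set δ : ℕ → ℚ → ℝ := fun n q =>
    if q ∈ T n then |M n q - M (n + 1) q| else M n q + M (n + 1) q with hδ
  have hδle : ∀ n q, |M n q - M (n + 1) q| ≤ δ n q := fun n q => by
    simp only [hδ]
    split_ifs
    · exact le_rfl
    · rw [abs_le]; constructor <;> linarith [hM0 n q, hM0 (n + 1) q]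
  have hδ0 : ∀ n q, 0 ≤ δ n q := fun n q => (abs_nonneg _).trans (hδle n q)
  have hsumM : ∀ n (K : Finset ℚ), Disjoint K (T n) →
      ∑ q ∈ K, M n q ≤ (x n).part.length - ∑ q ∈ T n, mass (u n q) := by
    intro n K hK
    have h1 := hMK n (K ∪ T n)
    rw [Finset.sum_union hK, Finset.sum_congr rfl (hMS n),
      Finset.sum_congr rfl fun q hq => hMS n q (hTS n hq)] at h1
    linarith [(hl n).sum_mass_le]
  have hsumM' : ∀ n (K : Finset ℚ), Disjoint K (T n) →
      ∑ q ∈ K, M (n + 1) q ≤ (x (n + 1)).part.length - ∑ q ∈ T n, mass (u (n + 1) q) := by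
    intro n K hK
    have h1 := hMK (n + 1) (K ∪ T n)
    rw [Finset.sum_union hK, Finset.sum_congr rfl (hMS (n + 1)),
      Finset.sum_congr rfl fun q hq => hMS (n + 1) q (hTS' n hq)] at h1
    linarith [(hl (n + 1)).sum_mass_le]
  have hδsum : ∀ n (K : Finset ℚ), ∑ q ∈ K, δ n q ≤ 2 * ρ n := by
    intro n K
    have e1 : ∑ q ∈ K ∩ T n, δ n q ≤ ∑ q ∈ T n, |mass (u n q) - mass (u (n + 1) q)| := by
      have : ∑ q ∈ T n, |mass (u n q) - mass (u (n + 1) q)| = ∑ q ∈ T n, δ n q :=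
        Finset.sum_congr rfl fun q hq => by
          simp only [hδ, if_pos hq]
          rw [hMS n q (hTS n hq), hMS (n + 1) q (hTS' n hq)]
      rw [this]
      exact Finset.sum_le_sum_of_subset_of_nonneg Finset.inter_subset_right
        fun q _ _ => hδ0 n q
    have e2 : ∑ q ∈ K \ T n, δ n q = ∑ q ∈ K \ T n, M n q + ∑ q ∈ K \ T n, M (n + 1) q := by
      rw [← Finset.sum_add_distrib]
      exact Finset.sum_congr rfl fun q hq => by
        simp only [hδ, if_neg (Finset.mem_sdiff.1 hq).2]
    have e3 : ∑ q ∈ K, δ n q = ∑ q ∈ K \ T n, δ n q + ∑ q ∈ K ∩ T n, δ n q := by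
      rw [← Finset.sum_sdiff (Finset.inter_subset_left : K ∩ T n ⊆ K),
        Finset.sdiff_inter_self_left]
    have e4 : 0 ≤ ∑ q ∈ T n, |mass (u n q) - mass (u (n + 1) q)| :=
      Finset.sum_nonneg fun _ _ => abs_nonneg _
    have hd : Disjoint (K \ T n) (T n) := Finset.sdiff_disjoint
    have h1 := (hm n).left
    have h2 := (hm n).right
    linarith [hsumM n _ hd, hsumM' n _ hd]
  -- `μ n k q` is the cost of the label `q` between the times `n` and `k`; a label unmatched at some
  -- step in between is charged its full mass at both times, even if it has been reused since
  set μ : ℕ → ℕ → ℚ → ℝ := fun n k q =>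
    if ∀ j, n ≤ j → j < k → q ∈ T j then |M n q - M k q| else M n q + M k q with hμ
  -- if `q` is first unmatched at step `k`, then `M n q ≤ |M n q - M k q| + M k q`
  have hμstep : ∀ n k q, n ≤ k → μ n (k + 1) q ≤ μ n k q + δ k q := by
    intro n k q hnk
    by_cases h1 : ∀ j, n ≤ j → j < k → q ∈ T j
    · have e1 : μ n k q = |M n q - M k q| := if_pos h1
      by_cases h2 : q ∈ T k
      · have h3 : ∀ j, n ≤ j → j < k + 1 → q ∈ T j := fun j hj hjk => by
          rcases Nat.lt_succ_iff_lt_or_eq.1 hjk with h | rfl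
          exacts [h1 j hj h, h2]
        have e2 : μ n (k + 1) q = |M n q - M (k + 1) q| := if_pos h3
        rw [e1, e2]
        exact (abs_sub_le _ (M k q) _).trans (by linarith [hδle k q])
      · have h3 : ¬ ∀ j, n ≤ j → j < k + 1 → q ∈ T j := fun h => h2 (h k hnk k.lt_succ_self)
        have e2 : μ n (k + 1) q = M n q + M (k + 1) q := if_neg h3
        have e3 : δ k q = M k q + M (k + 1) q := if_neg h2
        rw [e1, e2, e3]
        linarith [le_abs_self (M n q - M k q)]
    · have h3 : ¬ ∀ j, n ≤ j → j < k + 1 → q ∈ T j := fun h =>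
        h1 fun j hj hjk => h j hj (hjk.trans k.lt_succ_self)
      have e1 : μ n k q = M n q + M k q := if_neg h1
      have e2 : μ n (k + 1) q = M n q + M (k + 1) q := if_neg h3
      rw [e1, e2]
      linarith [(abs_le.1 (hδle k q)).1]
  have hμsum : ∀ n (K : Finset ℚ) i, ∑ q ∈ K, μ n (n + i) q ≤ 4 * (ρ n - ρ (n + i)) := by
    intro n K i
    induction i with
    | zero =>
      have : ∀ q, μ n (n + 0) q = 0 := fun q => by
        simp only [hμ, add_zero]
        rw [if_pos fun j h1 h2 => absurd h1 h2.not_ge, sub_self, abs_zero]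
      rw [Finset.sum_eq_zero fun q _ => this q]; simp
    | succ i ih =>
      have : ∑ q ∈ K, μ n (n + (i + 1)) q ≤ ∑ q ∈ K, μ n (n + i) q + ∑ q ∈ K, δ (n + i) q := by
        rw [← Finset.sum_add_distrib]
        exact Finset.sum_le_sum fun q _ => hμstep n (n + i) q (Nat.le_add_right _ _)
      have h1 := hδsum (n + i) K
      have h2 := hρs (n + i)
      rw [← add_assoc]
      rw [← add_assoc] at this
      linarith
  -- the limit masses
  have hMlim : ∀ q, ∃ l, Tendsto (fun n => M n q) atTop (𝓝 l) := fun q =>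
    cauchySeq_tendsto_of_complete (cauchySeq_of_le_geometric (1 / 2) 2 (by norm_num) fun n => by
      rw [Real.dist_eq]
      exact (hδle n q).trans ((Finset.sum_singleton (δ n) q).symm.trans_le (hδsum n {q})))
  choose m hmlim using hMlim
  have hm0 : ∀ q, 0 ≤ m q := fun q => ge_of_tendsto' (hmlim q) fun n => hM0 n q
  -- total cost of the label `q` from time `n` on
  set ν : ℕ → ℚ → ℝ := fun n q =>
    if ∀ j, n ≤ j → q ∈ T j then |M n q - m q| else M n q + m q with hν
  have hνle : ∀ n q, |M n q - m q| ≤ ν n q := fun n q => by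
    simp only [hν]
    split_ifs
    · exact le_rfl
    · rw [abs_le]; constructor <;> linarith [hM0 n q, hm0 q]
  have hν0 : ∀ n q, 0 ≤ ν n q := fun n q => (abs_nonneg _).trans (hνle n q)
  have hμν : ∀ n q, Tendsto (fun i => μ n (n + i) q) atTop (𝓝 (ν n q)) := by
    intro n q
    have hlim : Tendsto (fun i => M (n + i) q) atTop (𝓝 (m q)) :=
      (hmlim q).comp (tendsto_add_atTop_nat n |>.congr fun i => add_comm _ _)
    by_cases h1 : ∀ j, n ≤ j → q ∈ T j
    · have e1 : ν n q = |M n q - m q| := if_pos h1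
      rw [e1]
      refine ((tendsto_const_nhds.sub hlim).abs).congr fun i => ?_
      exact (if_pos fun j hj _ => h1 j hj).symm
    · have e1 : ν n q = M n q + m q := if_neg h1
      rw [e1]
      push Not at h1
      obtain ⟨j, hj, hjT⟩ := h1
      refine (tendsto_const_nhds.add hlim).congr' ?_
      filter_upwards [eventually_gt_atTop j] with i hi
      exact (if_neg fun h => hjT (h j hj (by omega))).symm
  have hνsum : ∀ n (K : Finset ℚ), ∑ q ∈ K, ν n q ≤ 4 * ρ n := fun n K =>
    le_of_tendsto' (tendsto_finsetSum K fun q _ => hμν n q) fun i =>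
      (hμsum n K i).trans (by linarith [hρpos (n + i)])
  have hsummable : Summable m := by
    refine summable_of_sum_le (c := ∑ q ∈ S 0, M 0 q + 4 * ρ 0) hm0 fun K => ?_
    have h1 : ∑ q ∈ K, m q ≤ ∑ q ∈ K, M 0 q + ∑ q ∈ K, ν 0 q := by
      rw [← Finset.sum_add_distrib]
      exact Finset.sum_le_sum fun q _ => by linarith [(abs_le.1 (hνle 0 q)).1]
    linarith [hνsum 0 K, hMK 0 K]
  -- a label of positive limit mass is matched forever from some time on: otherwise its mass is
  -- charged to every `ν n q ≤ 4 * ρ n`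
  have halive : ∀ q, 0 < m q → ∃ n, ∀ j, n ≤ j → q ∈ T j := by
    intro q hq
    by_contra! hcon
    have h1 : ∀ n, m q ≤ 4 * ρ n := fun n => by
      have e1 : ν n q = M n q + m q :=
        if_neg fun h => by obtain ⟨j, hj, hjT⟩ := hcon n; exact hjT (h j hj)
      have := hνsum n {q}
      rw [Finset.sum_singleton, e1] at this
      linarith [hM0 n q]
    have := ge_of_tendsto' (hρ0.const_mul 4) h1
    linarith
  -- the limit values
  have hFlim : ∀ q, ∃ l, (∃ n, ∀ j, n ≤ j → q ∈ T j) →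
      Tendsto (fun n => (x n).val (u n q)) atTop (𝓝 l) := by
    intro q
    by_cases hq : ∃ n, ∀ j, n ≤ j → q ∈ T j
    · obtain ⟨n, hn⟩ := hq
      have : CauchySeq fun i => (x (i + n)).val (u (i + n) q) :=
        cauchySeq_of_le_geometric (1 / 2) (ρ n) (by norm_num) fun i => by
          rw [Real.dist_eq]
          have := (hm (i + n)).val q (hn _ (Nat.le_add_left _ _))
          rw [show i + n + 1 = i + 1 + n by ring] at this
          refine this.trans (le_of_eq ?_)
          simp only [hρ, pow_add]; ring
      obtain ⟨l, hl⟩ := cauchySeq_tendsto_of_complete this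
      exact ⟨l, fun _ => (tendsto_add_atTop_iff_nat n).1 hl⟩
    · exact ⟨0, fun h => absurd h hq⟩
  choose F hFlim using hFlim
  obtain ⟨c, hc⟩ : ∃ c, Tendsto (fun n => (x n).f (x n).part.length) atTop (𝓝 c) :=
    cauchySeq_tendsto_of_complete (cauchySeq_of_le_geometric (1 / 2) 1 (by norm_num) fun n => by
      rw [Real.dist_eq, one_mul]; exact (hm n).top)
  -- the tail bound for a sequence with increments at most `ρ j`, as `∑ j ≥ n, ρ j = 2 * ρ n`
  have hbound : ∀ (a : ℕ → ℝ) (l : ℝ) (n : ℕ), Tendsto a atTop (𝓝 l) →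
      (∀ j, n ≤ j → |a j - a (j + 1)| ≤ ρ j) → |a n - l| ≤ 2 * ρ n := by
    intro a l n ha hj
    have h1 : ∀ i, |a n - a (n + i)| ≤ 2 * (ρ n - ρ (n + i)) := fun i => by
      induction i with
      | zero => simp
      | succ i ih =>
        have h2 := hj (n + i) (Nat.le_add_right _ _)
        have h3 := hρs (n + i)
        have h4 := abs_sub_le (a n) (a (n + i)) (a (n + i + 1))
        rw [← add_assoc]; linarith
    have h2 : Tendsto (fun i => a (n + i)) atTop (𝓝 l) :=
      ha.comp (tendsto_add_atTop_nat n |>.congr fun i => add_comm _ _)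
    exact le_of_tendsto' ((tendsto_const_nhds.sub h2).abs) fun i =>
      (h1 i).trans (by linarith [hρpos (n + i)])
  have hev : ∀ q, 0 < m q → ∀ᶠ n in atTop, q ∈ S n := fun q hq => by
    obtain ⟨n, hn⟩ := halive q hq
    filter_upwards [eventually_ge_atTop n] with j hj using hTS j (hn j hj)
  let d : MassData :=
    { m := m
      F := F
      c := c
      m_nonneg := hm0
      m_summable := hsummable
      F_nonneg := fun q hq =>
        ge_of_tendsto' (hFlim q (halive q hq)) fun n => (x n).f_nonneg _
      F_mono := fun p q hp hq hpq => by
        refine le_of_tendsto_of_tendsto (hFlim p (halive p hp)) (hFlim q (halive q hq)) ?_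
        filter_upwards [hev p hp, hev q hq] with n h1 h2
        exact (x n).val_mono ((hl n).1 p h1) ((hl n).1 q h2) ((hl n).2 p h1 q h2 hpq)
      F_le := fun q hq => by
        refine le_of_tendsto_of_tendsto (hFlim q (halive q hq)) hc ?_
        filter_upwards [hev q hq] with n h1 using (x n).val_le ((hl n).1 q h1)
      c_nonneg := ge_of_tendsto' hc fun n => (x n).f_nonneg _ }
  refine ⟨d.toJ, fun n => ?_⟩
  change _ ≤ 5 * ρ n
  have hρn := hρpos n
  -- only the labels that are matched forever enter the correspondence with the limit
  set W := (S n).filter fun q => ∀ j, n ≤ j → q ∈ T j with hW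
  have hWS : ∀ {q}, q ∈ W → q ∈ S n ∧ ∀ j, n ≤ j → q ∈ T j := fun h => Finset.mem_filter.1 h
  have hlW : Labelled (x n).part W (u n) := ⟨fun q hq => (hl n).1 q (hWS hq).1,
    fun p hp q hq => (hl n).2 p (hWS hp).1 q (hWS hq).1⟩
  have hWν : ∑ q ∈ W, |mass (u n q) - m q| = ∑ q ∈ W, ν n q :=
    Finset.sum_congr rfl fun q hq => by
      rw [← hMS n q (hWS hq).1]; exact (if_pos (hWS hq).2).symm
  have hdead : ∀ q, q ∉ W → ν n q = M n q + m q := by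
    intro q hq
    refine if_neg fun h => hq (Finset.mem_filter.2 ⟨hTS n (h n le_rfl), h⟩)
  refine d.dJ_toJ_le hlW ?_ ?_ ?_ ?_
  · change ∑ q ∈ W, |mass (u n q) - m q| + _ ≤ _
    have hsub : W ⊆ S n := Finset.filter_subset _ _
    have e1 : ∑ q ∈ S n, mass (u n q) ≤ ∑ q ∈ W, mass (u n q) + ∑ q ∈ S n \ W, ν n q := by
      rw [add_comm, ← Finset.sum_sdiff hsub]
      gcongr with q hq
      obtain ⟨hq1, hq2⟩ := Finset.mem_sdiff.1 hq
      rw [hdead q hq2, hMS n q hq1]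
      linarith [hm0 q]
    have e2 := Finset.sum_sdiff (f := ν n) hsub
    have e3 : ∑ q ∈ T n, mass (u n q) ≤ ∑ q ∈ S n, mass (u n q) :=
      Finset.sum_le_sum_of_subset_of_nonneg (hTS n) fun q hq _ => (mass_pos ((hl n).1 q hq)).le
    have e4 : 0 ≤ ∑ q ∈ T n, |mass (u n q) - mass (u (n + 1) q)| :=
      Finset.sum_nonneg fun _ _ => abs_nonneg _
    have e5 : ∑ q ∈ T n, |mass (u n q) - mass (u (n + 1) q)|
        + ((x n).part.length - ∑ q ∈ T n, mass (u n q)) ≤ ρ n := (hm n).left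
    rw [hWν]
    linarith [hνsum n (S n)]
  · change ∑ q ∈ W, |mass (u n q) - m q| + (∑' q, m q - ∑ q ∈ W, m q) ≤ _
    have e1 : ∑' q, m q ≤ 4 * ρ n - ∑ q ∈ W, ν n q + ∑ q ∈ W, m q := by
      refine hsummable.tsum_le_of_sum_le fun K => ?_
      have h1 : ∑ q ∈ K, m q ≤ ∑ q ∈ K ∪ W, m q :=
        Finset.sum_le_sum_of_subset_of_nonneg Finset.subset_union_left fun q _ _ => hm0 q
      have h2 := Finset.sum_sdiff (f := m) (Finset.subset_union_right : W ⊆ K ∪ W)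
      have h3 := Finset.sum_sdiff (f := ν n) (Finset.subset_union_right : W ⊆ K ∪ W)
      have h4 : ∑ q ∈ (K ∪ W) \ W, m q ≤ ∑ q ∈ (K ∪ W) \ W, ν n q :=
        Finset.sum_le_sum fun q hq => by
          rw [hdead q (Finset.mem_sdiff.1 hq).2]; linarith [hM0 n q]
      linarith [hνsum n (K ∪ W)]
    rw [hWν]
    linarith
  · intro q hq _
    have := hbound _ _ n (hFlim q ⟨n, (hWS hq).2⟩) fun j hj => (hm j).val q ((hWS hq).2 j hj)
    change |_ - F q| ≤ _
    linarith
  · have := hbound _ _ n hc fun j _ => (hm j).top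
    change |_ - c| ≤ _
    linarith

/-- `(J, d_J)` is complete (every `d_J`-Cauchy sequence has a
`d_J`-limit) and separable (there is a countable `d_J`-dense set). -/
theorem dJ_complete_separable :
    (∀ x : ℕ → JPoint,
      (∀ ε : ℝ, 0 < ε → ∃ N : ℕ, ∀ m ≥ N, ∀ n ≥ N, dJ (x m) (x n) < ε) →
      ∃ y : JPoint, Tendsto (fun n => dJ (x n) y) atTop (𝓝 0)) ∧
    (∃ s : Set JPoint, s.Countable ∧
      ∀ x : JPoint, ∀ ε : ℝ, 0 < ε → ∃ y ∈ s, dJ x y < ε) := by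
  refine ⟨fun x hx => ?_, rationalPoints, rationalPoints_countable,
    fun x ε hε => exists_rationalPoint x hε⟩
  choose N hN using fun k : ℕ => hx ((1 / 2) ^ k) (by positivity)
  -- `σ` is monotone and dominates `N`, so `x ∘ σ` is a fast Cauchy subsequence
  let σ : ℕ → ℕ := fun k => ∑ j ∈ Finset.range (k + 1), N j
  have hσN : ∀ k, N k ≤ σ k := fun k =>
    Finset.single_le_sum (f := N) (fun _ _ => Nat.zero_le _) (Finset.self_mem_range_succ k)
  have hσ : ∀ k, σ k ≤ σ (k + 1) := fun k => by
    simp only [σ, Finset.sum_range_succ _ (k + 1)]; exact Nat.le_add_right _ _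
  obtain ⟨y, hy⟩ := exists_limit (fun k => x (σ k)) fun k =>
    hN k _ (hσN k) _ ((hσN k).trans (hσ k))
  refine ⟨y, tendsto_order.2 ⟨fun a ha => Eventually.of_forall fun n =>
    ha.trans_le (dJ_nonneg _ _), fun a ha => ?_⟩⟩
  obtain ⟨k, hk⟩ := exists_pow_lt_of_lt_one (show 0 < a / 6 by linarith)
    (show (1 / 2 : ℝ) < 1 by norm_num)
  filter_upwards [eventually_ge_atTop (N k)] with n hn
  have h1 := dJ_triangle (x n) (x (σ k)) y
  have h2 := hN k n hn (σ k) (hσN k)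
  have h3 := hy k
  linarith
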